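/- For every n ≥ 2, the pattern counts of the Sierpiński triangle satisfy B_{2n} + 6 = A_n + 2·C_{n+1} + B_{n+1} and B_{2n+1} + 6 = A_{n+1} + 2·B_{n+1} + D_{n+2}. -/

import Mathlib

/-- Whether the unit triangle at row `r`, column `c` of the Sierpiński triangle is filled:
upward units `(r, 2j)` are filled iff `choose r j` is odd; downward units are unfilled. -/
def filled (r c : ℕ) : Bool :=
  decide (c % 2 = 0 ∧ Nat.choose r (c / 2) % 2 = 1)

/-- The upward pattern of size `n` at upward position `(r, c)`. -/
def upPattern (n r c : ℕ) : ℕ × ℕ → Bool := fun q =>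
  if q.1 < n ∧ q.2 ≤ 2 * q.1 then filled (r + q.1) (c + q.2) else false

/-- The set of all upward patterns of size `n` occurring in the Sierpiński triangle. -/
def Pup (n : ℕ) : Set (ℕ × ℕ → Bool) :=
  { p | ∃ r c : ℕ, c % 2 = 0 ∧ c ≤ 2 * r ∧ p = upPattern n r c }

/-- The downward pattern of size `n` at downward position `(r, c)`. -/
def downPattern (n r c : ℕ) : ℕ × ℕ → Bool := fun q =>
  if q.1 < n ∧ q.2 ≤ 2 * (n - 1 - q.1) then filled (r + q.1) (c + 2 * q.1 + q.2) else false

/-- The set of all downward patterns of size `n` occurring in the Sierpiński triangle. -/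
def Pdown (n : ℕ) : Set (ℕ × ℕ → Bool) :=
  { p | ∃ r c : ℕ, c % 2 = 1 ∧ c + 2 * (n - 1) ≤ 2 * r ∧ p = downPattern n r c }

/-- The top-cut pattern of size `n` at upward position `(r, c)` (apex unit removed). -/
def topCutPattern (n r c : ℕ) : ℕ × ℕ → Bool := fun q =>
  if 1 ≤ q.1 ∧ q.1 < n ∧ q.2 ≤ 2 * q.1 then filled (r + q.1) (c + q.2) else false

/-- The set of all top-cut patterns of size `n` occurring in the Sierpiński triangle. -/
def PtopCut (n : ℕ) : Set (ℕ × ℕ → Bool) :=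
  { p | ∃ r c : ℕ, c % 2 = 0 ∧ c ≤ 2 * r ∧ p = topCutPattern n r c }

/-- The bottom-cut pattern of size `n` at upward position `(r, c)`
(both bottom corner units removed). -/
def botCutPattern (n r c : ℕ) : ℕ × ℕ → Bool := fun q =>
  if (q.1 < n ∧ q.2 ≤ 2 * q.1) ∧ ¬(q.1 = n - 1 ∧ (q.2 = 0 ∨ q.2 = 2 * (n - 1)))
  then filled (r + q.1) (c + q.2) else false

/-- The set of all bottom-cut patterns of size `n` occurring in the Sierpiński triangle. -/
def PbotCut (n : ℕ) : Set (ℕ × ℕ → Bool) :=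
  { p | ∃ r c : ℕ, c % 2 = 0 ∧ c ≤ 2 * r ∧ p = botCutPattern n r c }

/-- The fully-cut pattern of size `n` at upward position `(r, c)`
(all three corner units removed). -/
def fullyCutPattern (n r c : ℕ) : ℕ × ℕ → Bool := fun q =>
  if (q.1 < n ∧ q.2 ≤ 2 * q.1) ∧ q ≠ (0, 0) ∧ ¬(q.1 = n - 1 ∧ (q.2 = 0 ∨ q.2 = 2 * (n - 1)))
  then filled (r + q.1) (c + q.2) else false

/-- The set of all fully-cut patterns of size `n` occurring in the Sierpiński triangle. -/
def PfullyCut (n : ℕ) : Set (ℕ × ℕ → Bool) :=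
  { p | ∃ r c : ℕ, c % 2 = 0 ∧ c ≤ 2 * r ∧ p = fullyCutPattern n r c }

/-- Upward patterns of size `m` occurring inside the approximation `T_N`
(rows `0, …, 2^N - 1`). -/
def PupN (N m : ℕ) : Set (ℕ × ℕ → Bool) :=
  { p | ∃ r c : ℕ, c % 2 = 0 ∧ c ≤ 2 * r ∧ r + m ≤ 2 ^ N ∧ p = upPattern m r c }

/-- Upward patterns of size `n` at positions with `r ≡ ρ [MOD 2]` and `c ≡ γ [MOD 4]`. -/
def PupRC (n ρ γ : ℕ) : Set (ℕ × ℕ → Bool) :=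
  { p | ∃ r c : ℕ, c % 2 = 0 ∧ c ≤ 2 * r ∧ r % 2 = ρ ∧ c % 4 = γ ∧ p = upPattern n r c }

/-- Downward patterns of size `n` at positions with `r ≡ ρ [MOD 2]` and `c ≡ γ [MOD 4]`. -/
def PdownRC (n ρ γ : ℕ) : Set (ℕ × ℕ → Bool) :=
  { p | ∃ r c : ℕ, c % 2 = 1 ∧ c + 2 * (n - 1) ≤ 2 * r ∧ r % 2 = ρ ∧ c % 4 = γ ∧
      p = downPattern n r c }

/-- Top-cut patterns of size `n` at positions with `r ≡ ρ [MOD 2]` and `c ≡ γ [MOD 4]`. -/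
def PtopCutRC (n ρ γ : ℕ) : Set (ℕ × ℕ → Bool) :=
  { p | ∃ r c : ℕ, c % 2 = 0 ∧ c ≤ 2 * r ∧ r % 2 = ρ ∧ c % 4 = γ ∧ p = topCutPattern n r c }

/-- Fully-cut patterns of size `n` at positions with `r ≡ ρ [MOD 2]` and `c ≡ γ [MOD 4]`. -/
def PfullyCutRC (n ρ γ : ℕ) : Set (ℕ × ℕ → Bool) :=
  { p | ∃ r c : ℕ, c % 2 = 0 ∧ c ≤ 2 * r ∧ r % 2 = ρ ∧ c % 4 = γ ∧ p = fullyCutPattern n r c }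

/-- The everywhere-unfilled upward pattern. -/
def blankUp : ℕ × ℕ → Bool := fun _ => false

/-- The upward pattern that is filled exactly at the apex `(0, 0)`. -/
def topUp : ℕ × ℕ → Bool := fun q => decide (q = (0, 0))

/-- The size-`N` upward pattern that is filled exactly at the bottom-left corner `(N-1, 0)`. -/
def botleftUp (N : ℕ) : ℕ × ℕ → Bool := fun q => decide (q = (N - 1, 0))

/-- The size-`N` upward pattern filled exactly at the bottom-right corner `(N-1, 2(N-1))`. -/
def botrightUp (N : ℕ) : ℕ × ℕ → Bool := fun q => decide (q = (N - 1, 2 * (N - 1)))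

/-- The everywhere-unfilled downward pattern. -/
def blankDown : ℕ × ℕ → Bool := fun _ => false

/-- The size-`N` downward pattern filled exactly at the upward units along the top side:
positions `(0, m)` with `m` odd, `1 ≤ m ≤ 2N - 3`. -/
def topsideDown (N : ℕ) : ℕ × ℕ → Bool := fun q =>
  decide (q.1 = 0 ∧ q.2 % 2 = 1 ∧ 1 ≤ q.2 ∧ q.2 ≤ 2 * N - 3)

/-- The size-`N` downward pattern filled exactly at the upward units along the left side:
positions `(k, 1)` with `0 ≤ k ≤ N - 2`. -/
def leftsideDown (N : ℕ) : ℕ × ℕ → Bool := fun q =>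
  decide (q.2 = 1 ∧ q.1 ≤ N - 2)

/-- The size-`N` downward pattern filled exactly at the upward units along the right side:
positions `(k, 2(N-1-k) - 1)` with `0 ≤ k ≤ N - 2`. -/
def rightsideDown (N : ℕ) : ℕ × ℕ → Bool := fun q =>
  decide (q.1 ≤ N - 2 ∧ q.2 = 2 * (N - 1 - q.1) - 1)

/-!
By Lucas' theorem the Sierpiński triangle is fixed by the substitution replacing each upward unit by
a block of three copies and one empty cell. Writing a position as `2 • y + e` with `e` one of
`(0, 0)`, `(2, 1)`, `(1, 0)`, `(1, 1)`, a pattern at it is the subdivision of, and amounts to, a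
pattern at `y` through a coarser window. For the top-cut windows of sizes `2n` and `2n + 1` the four
coarser windows are those on the right-hand sides, where the bottom-cut windows only appear after a
rotation of the triangle by a third of a turn.

It remains to count the patterns found in more than one of the four families. All the copies in a
block with a filled cell are filled. If a pattern belongs to two families, such a copy cannot be an
empty cell of the other grid of blocks, so the filled cells are pushed against the border of the
window. The blank pattern is in all four families, and the patterns filled exactly in the second
row, the left corner or the right corner are in two families each, so that the sum of the four
cardinalities exceeds the number of patterns by `3 + 1 + 1 + 1 = 6`.
-/

namespace Sierpinski

/-- The Sierpiński triangle as the set of odd entries of Pascal's triangle: the cell `(r, j)`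
stands for the upward unit `(r, 2j)`. The downward units, always unfilled, are left out. -/
def oddPascal : Set (ℕ × ℕ) := {x | Odd (x.1.choose x.2)}

lemma mem_oddPascal {r j : ℕ} : (r, j) ∈ oddPascal ↔ Odd (r.choose j) := Iff.rfl

lemma odd_choose_iff {r j : ℕ} :
    Odd (r.choose j) ↔ (r % 2 = 1 ∨ j % 2 = 0) ∧ Odd ((r / 2).choose (j / 2)) := by
  have lucas : r.choose j ≡ (r % 2).choose (j % 2) * (r / 2).choose (j / 2) [MOD 2] :=
    Choose.choose_modEq_choose_mod_mul_choose_div_nat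
  rw [Nat.odd_iff, lucas, ← Nat.odd_iff, Nat.odd_mul]
  refine and_congr_left fun _ => ?_
  rcases Nat.mod_two_eq_zero_or_one r with hr | hr <;>
    rcases Nat.mod_two_eq_zero_or_one j with hj | hj <;> simp [hr, hj]

lemma odd_choose_two_pow_add {M k c : ℕ} (hc : c < 2 ^ M) :
    Odd ((2 ^ M + k).choose c) ↔ Odd (k.choose c) := by
  induction M generalizing k c with
  | zero => simp [Nat.lt_one_iff.1 hc]
  | succ M ih =>
    rw [pow_succ] at hc ⊢
    have half_row : (2 ^ M * 2 + k) / 2 = 2 ^ M + k / 2 := by omega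
    rw [odd_choose_iff, odd_choose_iff (r := k), half_row, ih (by omega)]
    exact and_congr_left fun _ => by omega

/-- The central hole of the first `2 ^ (M + 1)` rows. -/
lemma two_pow_add_notMem_oddPascal {M k c : ℕ} (hk : k < c) (hc : c < 2 ^ M) :
    (2 ^ M + k, c) ∉ oddPascal := by
  simp [mem_oddPascal, odd_choose_two_pow_add hc, Nat.choose_eq_zero_of_lt hk]

lemma two_pow_add_self_mem_oddPascal {M k : ℕ} (hk : k < 2 ^ M) : (2 ^ M + k, k) ∈ oddPascal := by
  simp [mem_oddPascal, odd_choose_two_pow_add hk]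

lemma two_pow_add_two_pow_mem_oddPascal {M k : ℕ} (hk : k < 2 ^ M) :
    (2 ^ M + k, 2 ^ M) ∈ oddPascal := by
  rw [mem_oddPascal, Nat.choose_symm_add]
  exact two_pow_add_self_mem_oddPascal hk

lemma odd_choose_rotate {M r j : ℕ} (hj : j ≤ r) (hr : r < 2 ^ M) :
    Odd ((2 ^ M - 1 - j).choose (r - j)) ↔ Odd (r.choose j) := by
  induction M generalizing r j with
  | zero =>
    obtain rfl : r = 0 := by simpa using hr
    obtain rfl : j = 0 := by simpa using hj
    simp
  | succ M ih =>
    rw [pow_succ] at hr ⊢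
    rw [odd_choose_iff, odd_choose_iff (r := r)]
    by_cases h : r % 2 = 1 ∨ j % 2 = 0
    · have half_row : (2 ^ M * 2 - 1 - j) / 2 = 2 ^ M - 1 - j / 2 := by omega
      have half_col : (r - j) / 2 = r / 2 - j / 2 := by omega
      rw [half_row, half_col, ih (by omega) (by omega)]
      exact and_congr_left fun _ => by omega
    · exact iff_of_false (fun h' => by omega) fun h' => h h'.1

lemma two_pow_sub_one_mem_oddPascal {M j : ℕ} (hj : j < 2 ^ M) : (2 ^ M - 1, j) ∈ oddPascal := by
  simpa [mem_oddPascal] using (odd_choose_rotate j.zero_le hj).2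

/-- The positions of patterns: the cell `(r, j)` is the apex `(r, 2j)` of an upward pattern. -/
def positions : Set (ℕ × ℕ) := {x | x.2 ≤ x.1}

/-- The filled cells, relative to `x`, of the pattern at `x`, where the window `W` is the set of
relative cells which the pattern records. -/
def patternAt (W : Set (ℕ × ℕ)) (x : ℕ × ℕ) : Set (ℕ × ℕ) := {q ∈ W | x + q ∈ oddPascal}

/-- The patterns seen through the window `W` anywhere in the Sierpiński triangle. -/
def patterns (W : Set (ℕ × ℕ)) : Set (Set (ℕ × ℕ)) := patternAt W '' positions

/-- The window of uncut patterns of size `n`. Its corners are `(0, 0)`, `(n - 1, 0)` and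
`(n - 1, n - 1)`; the cut windows are obtained by removing some of them. -/
def triangle (n : ℕ) : Set (ℕ × ℕ) := {q | q.2 ≤ q.1 ∧ q.1 < n}

lemma mem_triangle {n k i : ℕ} : (k, i) ∈ triangle n ↔ i ≤ k ∧ k < n := Iff.rfl

lemma mem_triangle_sdiff_apex {N k i : ℕ} :
    (k, i) ∈ triangle N \ {(0, 0)} ↔ i ≤ k ∧ 1 ≤ k ∧ k < N := by
  simp only [Set.mem_sdiff, mem_triangle, Set.mem_singleton_iff, Prod.mk.injEq]
  omega

lemma triangle_finite (n : ℕ) : (triangle n).Finite :=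
  ((Set.finite_Iio n).prod (Set.finite_Iio n)).subset fun _ hq => ⟨hq.2, hq.1.trans_lt hq.2⟩

lemma patternAt_subset (W : Set (ℕ × ℕ)) (x : ℕ × ℕ) : patternAt W x ⊆ W := Set.sep_subset ..

lemma image_patternAt_subset_powerset (W X : Set (ℕ × ℕ)) : patternAt W '' X ⊆ W.powerset :=
  Set.image_subset_iff.2 fun x _ => patternAt_subset W x

lemma image_patternAt_finite {W : Set (ℕ × ℕ)} (hW : W.Finite) (X : Set (ℕ × ℕ)) :
    (patternAt W '' X).Finite :=
  hW.powerset.subset (image_patternAt_subset_powerset W X)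

section Encoding

open Classical in
/-- The Boolean-valued form of a set of cells, on all upward and downward units. -/
noncomputable def toBool (s : Set (ℕ × ℕ)) : ℕ × ℕ → Bool := fun q =>
  decide (q.2 % 2 = 0 ∧ (q.1, q.2 / 2) ∈ s)

lemma toBool_injective : Function.Injective toBool := by
  intro s t h
  ext ⟨k, i⟩
  simpa [toBool] using congrFun h (k, 2 * i)

lemma ncard_eq_ncard_patterns {U : ℕ × ℕ → Prop} [DecidablePred U] {W : Set (ℕ × ℕ)}
    (hUW : ∀ k i, U (k, 2 * i) ↔ (k, i) ∈ W) :
    {p : ℕ × ℕ → Bool | ∃ r c : ℕ, c % 2 = 0 ∧ c ≤ 2 * r ∧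
      p = fun q => if U q then filled (r + q.1) (c + q.2) else false}.ncard =
    (patterns W).ncard := by
  have toBool_patternAt (r j : ℕ) : toBool (patternAt W (r, j)) =
      fun q => if U q then filled (r + q.1) (2 * j + q.2) else false := by
    funext ⟨k, m⟩
    obtain ⟨i, rfl | rfl⟩ := Nat.even_or_odd' m
    · have half_col : (2 * j + 2 * i) / 2 = j + i := by omega
      by_cases hU : U (k, 2 * i) <;>
        simp [toBool, patternAt, mem_oddPascal, Nat.odd_iff, filled, half_col, ← hUW, hU]
    · have odd_col : (2 * j + (2 * i + 1)) % 2 = 1 := by omega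
      simp [toBool, filled, odd_col]
  rw [patterns, ← Set.ncard_image_of_injective _ toBool_injective, ← Set.image_comp]
  congr 1
  ext p
  constructor
  · rintro ⟨r, c, hc, hcr, rfl⟩
    obtain ⟨j, rfl⟩ := Nat.dvd_of_mod_eq_zero hc
    exact ⟨(r, j), Nat.le_of_mul_le_mul_left hcr two_pos, toBool_patternAt r j⟩
  · rintro ⟨⟨r, j⟩, hj, rfl⟩
    exact ⟨r, 2 * j, by omega, Nat.mul_le_mul_left 2 hj, toBool_patternAt r j⟩

lemma ncard_Pup (n : ℕ) : (Pup n).ncard = (patterns (triangle n)).ncard :=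
  ncard_eq_ncard_patterns fun k i => by rw [mem_triangle]; omega

lemma ncard_PtopCut (n : ℕ) : (PtopCut n).ncard = (patterns (triangle n \ {(0, 0)})).ncard :=
  ncard_eq_ncard_patterns fun k i => by
    simp only [Set.mem_sdiff, mem_triangle, Set.mem_singleton_iff, Prod.mk.injEq]; omega

lemma ncard_PbotCut (n : ℕ) :
    (PbotCut n).ncard = (patterns (triangle n \ {(n - 1, 0), (n - 1, n - 1)})).ncard :=
  ncard_eq_ncard_patterns fun k i => by
    simp only [Set.mem_sdiff, mem_triangle, Set.mem_insert_iff, Set.mem_singleton_iff,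
      Prod.mk.injEq]
    omega

lemma ncard_PfullyCut (n : ℕ) :
    (PfullyCut n).ncard =
      (patterns (triangle n \ {(0, 0), (n - 1, 0), (n - 1, n - 1)})).ncard :=
  ncard_eq_ncard_patterns fun k i => by
    simp only [ne_eq, Set.mem_sdiff, mem_triangle, Set.mem_insert_iff, Set.mem_singleton_iff,
      Prod.mk.injEq]
    omega

end Encoding

section Rotation

/-- The rotation of `triangle n` by a third of a turn, `(0, 0) ↦ (n - 1, 0) ↦ (n - 1, n - 1)`. -/
def rotate (n : ℕ) (q : ℕ × ℕ) : ℕ × ℕ := (n - 1 - q.2, q.1 - q.2)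

lemma rotate_mem_triangle {n : ℕ} {q : ℕ × ℕ} (hq : q ∈ triangle n) : rotate n q ∈ triangle n := by
  simp only [triangle, rotate, Set.mem_ofPred_eq] at *
  omega

lemma rotate_rotate_rotate {n : ℕ} {q : ℕ × ℕ} (hq : q ∈ triangle n) :
    rotate n (rotate n (rotate n q)) = q := by
  simp only [triangle, rotate, Set.mem_ofPred_eq, Prod.ext_iff] at *
  omega

lemma rotate_injOn (n : ℕ) : (triangle n).InjOn (rotate n) := fun p hp q hq h => by
  rw [← rotate_rotate_rotate hp, h, rotate_rotate_rotate hq]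

lemma rotate_image_triangle (n : ℕ) : rotate n '' triangle n = triangle n :=
  (Set.image_subset_iff.2 fun _ => rotate_mem_triangle).antisymm fun _ hq =>
    ⟨_, rotate_mem_triangle (rotate_mem_triangle hq), rotate_rotate_rotate hq⟩

lemma rotate_two_pow_mem_oddPascal {M : ℕ} {x : ℕ × ℕ} (hx : x ∈ triangle (2 ^ M)) :
    rotate (2 ^ M) x ∈ oddPascal ↔ x ∈ oddPascal :=
  odd_choose_rotate hx.1 hx.2

lemma patternAt_rotate_image {n M : ℕ} {W : Set (ℕ × ℕ)} {x : ℕ × ℕ} (hW : W ⊆ triangle n)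
    (hx : x ∈ positions) (hM : x.1 + n ≤ 2 ^ M) :
    patternAt (rotate n '' W) (2 ^ M - n - x.2, x.1 - x.2) = rotate n '' patternAt W x := by
  have rotate_add (q) (hq : q ∈ W) :
      (2 ^ M - n - x.2, x.1 - x.2) + rotate n q = rotate (2 ^ M) (x + q) := by
    have := hW hq
    simp only [positions, triangle, Set.mem_ofPred_eq] at hx this
    simp only [rotate, Prod.ext_iff, Prod.fst_add, Prod.snd_add]
    omega
  have rotate_mem (q) (hq : q ∈ W) :
      (2 ^ M - n - x.2, x.1 - x.2) + rotate n q ∈ oddPascal ↔ x + q ∈ oddPascal := by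
    rw [rotate_add q hq]
    exact rotate_two_pow_mem_oddPascal
      ⟨add_le_add hx (hW hq).1, (Nat.add_lt_add_left (hW hq).2 _).trans_le hM⟩
  ext p
  constructor
  · rintro ⟨⟨q, hq, rfl⟩, hp⟩
    exact ⟨q, ⟨hq, (rotate_mem q hq).1 hp⟩, rfl⟩
  · rintro ⟨q, ⟨hq, hxq⟩, rfl⟩
    exact ⟨⟨q, hq, rfl⟩, (rotate_mem q hq).2 hxq⟩

lemma ncard_patterns_le_rotate {n : ℕ} {W : Set (ℕ × ℕ)} (hW : W ⊆ triangle n) :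
    (patterns W).ncard ≤ (patterns (rotate n '' W)).ncard := by
  have image_inj : (patterns W).InjOn (Set.image (rotate n)) :=
    ((rotate_injOn n).mono hW).image.mono (image_patternAt_subset_powerset W positions)
  have image_subset : Set.image (rotate n) '' patterns W ⊆ patterns (rotate n '' W) := by
    rintro _ ⟨_, ⟨x, hx, rfl⟩, rfl⟩
    have hM : x.1 + n ≤ 2 ^ (x.1 + n) := Nat.lt_two_pow_self.le
    refine ⟨_, ?_, patternAt_rotate_image hW hx hM⟩
    simp only [positions, Set.mem_ofPred_eq] at *
    omega
  rw [← image_inj.ncard_image]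
  exact Set.ncard_le_ncard image_subset
    (image_patternAt_finite (((triangle_finite n).subset hW).image _) _)

lemma ncard_patterns_rotate {n : ℕ} {W : Set (ℕ × ℕ)} (hW : W ⊆ triangle n) :
    (patterns (rotate n '' W)).ncard = (patterns W).ncard := by
  have rotate_subset {V : Set (ℕ × ℕ)} (hV : V ⊆ triangle n) : rotate n '' V ⊆ triangle n :=
    (Set.image_mono hV).trans_eq (rotate_image_triangle n)
  have rotate_thrice : rotate n '' (rotate n '' (rotate n '' W)) = W := by
    rw [← Set.image_comp, ← Set.image_comp]
    exact (Set.image_congr fun _ hq => rotate_rotate_rotate (hW hq)).trans (Set.image_id W)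
  refine le_antisymm ?_ (ncard_patterns_le_rotate hW)
  calc (patterns (rotate n '' W)).ncard
    _ ≤ (patterns (rotate n '' (rotate n '' W))).ncard :=
      ncard_patterns_le_rotate (rotate_subset hW)
    _ ≤ (patterns (rotate n '' (rotate n '' (rotate n '' W)))).ncard :=
      ncard_patterns_le_rotate (rotate_subset (rotate_subset hW))
    _ = (patterns W).ncard := by rw [rotate_thrice]

lemma ncard_patterns_sdiff_pair_rotate {n : ℕ} {p q : ℕ × ℕ} (hp : p ∈ triangle n)
    (hq : q ∈ triangle n) :
    (patterns (triangle n \ {rotate n p, rotate n q})).ncard =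
      (patterns (triangle n \ {p, q})).ncard := by
  have hpq : {p, q} ⊆ triangle n := Set.pair_subset hp hq
  rw [← ncard_patterns_rotate (W := triangle n \ {p, q}) Set.sdiff_subset,
    (rotate_injOn n).image_sdiff_subset hpq, rotate_image_triangle, Set.image_pair]

lemma ncard_patterns_sdiff_apex_right (n : ℕ) :
    (patterns (triangle (n + 1) \ {(0, 0), (n, n)})).ncard =
      (patterns (triangle (n + 1) \ {(n, 0), (n, n)})).ncard := by
  rw [Set.pair_comm]
  simpa [rotate] using ncard_patterns_sdiff_pair_rotate (n := n + 1) (p := (n, 0)) (q := (n, n))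
    (by simp [mem_triangle]) (by simp [mem_triangle])

lemma ncard_patterns_sdiff_apex_left (n : ℕ) :
    (patterns (triangle (n + 1) \ {(0, 0), (n, 0)})).ncard =
      (patterns (triangle (n + 1) \ {(n, 0), (n, n)})).ncard := by
  rw [← ncard_patterns_sdiff_apex_right, Set.pair_comm]
  simpa [rotate] using ncard_patterns_sdiff_pair_rotate (n := n + 1) (p := (0, 0)) (q := (n, n))
    (by simp [mem_triangle]) (by simp [mem_triangle])

end Rotation

section Subdivision

/-- The substitution `μ`: the cell `(r, j)` becomes the block of the cells `(2r, 2j)`,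
`(2r + 1, 2j)`, `(2r + 1, 2j + 1)` and `(2r, 2j + 1)`, the first three of which are its copies,
whereas the last one is empty. -/
def substitution (P : Set (ℕ × ℕ)) : Set (ℕ × ℕ) :=
  {q | (q.1 % 2 = 1 ∨ q.2 % 2 = 0) ∧ (q.1 / 2, q.2 / 2) ∈ P}

lemma substitution_oddPascal : substitution oddPascal = oddPascal :=
  Set.ext fun _ => odd_choose_iff.symm

/-- The positions `2 • y + e`: for `e` equal to `(0, 0)`, `(1, 0)` or `(1, 1)` they are the copies
of the position `y`, and for `e = (2, 1)` they are the empty cells of the blocks. -/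
def childPositions (e : ℕ × ℕ) : Set (ℕ × ℕ) := (fun y => 2 • y + e) '' positions

/-- The patterns seen through the window `W` at the positions `2 • y + e`. -/
def childPatterns (e : ℕ × ℕ) (W : Set (ℕ × ℕ)) : Set (Set (ℕ × ℕ)) :=
  patternAt W '' childPositions e

lemma mem_childPositions {r j a b : ℕ} :
    (r, j) ∈ childPositions (a, b) ↔
      r % 2 = a % 2 ∧ j % 2 = b % 2 ∧ b ≤ j ∧ j + a ≤ r + b := by
  constructor
  · rintro ⟨⟨u, v⟩, huv, h⟩
    simp only [positions, Set.mem_ofPred_eq, Prod.smul_mk, smul_eq_mul, Prod.mk_add_mk,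
      Prod.mk.injEq] at huv h
    omega
  · intro h
    refine ⟨((r - a) / 2, (j - b) / 2), ?_, ?_⟩
    · simp only [positions, Set.mem_ofPred_eq]
      omega
    · simp only [Prod.smul_mk, smul_eq_mul, Prod.mk_add_mk, Prod.mk.injEq]
      omega

lemma positions_eq_union_childPositions :
    positions = childPositions (0, 0) ∪ childPositions (2, 1) ∪ childPositions (1, 0) ∪
      childPositions (1, 1) := by
  ext ⟨r, j⟩
  simp only [positions, Set.mem_ofPred_eq, Set.mem_union, mem_childPositions]
  omega

lemma patterns_eq_union_childPatterns (W : Set (ℕ × ℕ)) :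
    patterns W = childPatterns (0, 0) W ∪ childPatterns (2, 1) W ∪ childPatterns (1, 0) W ∪
      childPatterns (1, 1) W := by
  simp only [patterns, positions_eq_union_childPositions, Set.image_union, childPatterns]

lemma childPatterns_finite {W : Set (ℕ × ℕ)} (hW : W.Finite) (e : ℕ × ℕ) :
    (childPatterns e W).Finite :=
  image_patternAt_finite hW _

/-- The part seen through the window `W` at `e` of the substitution of `P`. -/
def subdivide (e : ℕ × ℕ) (W P : Set (ℕ × ℕ)) : Set (ℕ × ℕ) := {q ∈ W | e + q ∈ substitution P}

/-- The cells whose copies under the substitution are visible through the window `W` at `e`. -/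
def coarsen (e : ℕ × ℕ) (W : Set (ℕ × ℕ)) : Set (ℕ × ℕ) :=
  {p | ∃ q ∈ W, e + q ∈ substitution {p}}

lemma patternAt_child (W : Set (ℕ × ℕ)) (e y : ℕ × ℕ) :
    patternAt W (2 • y + e) = subdivide e W (patternAt (coarsen e W) y) := by
  ext q
  have half_row : (2 * y.1 + e.1 + q.1) / 2 = y.1 + (e.1 + q.1) / 2 := by omega
  have half_col : (2 * y.2 + e.2 + q.2) / 2 = y.2 + (e.2 + q.2) / 2 := by omega
  have mod_row : (2 * y.1 + e.1 + q.1) % 2 = (e.1 + q.1) % 2 := by omega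
  have mod_col : (2 * y.2 + e.2 + q.2) % 2 = (e.2 + q.2) % 2 := by omega
  have visible (hq : q ∈ W) (hcopy : (e.1 + q.1) % 2 = 1 ∨ (e.2 + q.2) % 2 = 0) :
      ((e.1 + q.1) / 2, (e.2 + q.2) / 2) ∈ coarsen e W := ⟨q, hq, hcopy, rfl⟩
  nth_rw 1 [patternAt, ← substitution_oddPascal]
  simp only [subdivide, substitution, patternAt, Set.mem_ofPred_eq, Prod.fst_add, Prod.snd_add,
    Prod.smul_fst, Prod.smul_snd, smul_eq_mul, half_row, half_col, mod_row, mod_col]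
  tauto

lemma subdivide_injOn (e : ℕ × ℕ) (W : Set (ℕ × ℕ)) :
    (coarsen e W).powerset.InjOn (subdivide e W) := by
  have subset_of_eq {P Q : Set (ℕ × ℕ)} (hP : P ⊆ coarsen e W)
      (h : subdivide e W P = subdivide e W Q) : P ⊆ Q := fun p hp => by
    obtain ⟨q, hq, hcopy, rfl⟩ := hP hp
    have hqP : q ∈ subdivide e W P := ⟨hq, hcopy, hp⟩
    rw [h] at hqP
    exact hqP.2.2
  exact fun P hP Q hQ h => (subset_of_eq hP h).antisymm (subset_of_eq hQ h.symm)

lemma childPatterns_eq_subdivide_image (e : ℕ × ℕ) (W : Set (ℕ × ℕ)) :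
    childPatterns e W = subdivide e W '' patterns (coarsen e W) := by
  simp only [childPatterns, childPositions, patterns, Set.image_image, patternAt_child]

lemma ncard_childPatterns (e : ℕ × ℕ) (W : Set (ℕ × ℕ)) :
    (childPatterns e W).ncard = (patterns (coarsen e W)).ncard := by
  rw [childPatterns_eq_subdivide_image]
  exact ((subdivide_injOn e W).mono (image_patternAt_subset_powerset _ _)).ncard_image

lemma mem_coarsen {a b k i : ℕ} {W : Set (ℕ × ℕ)} :
    (k, i) ∈ coarsen (a, b) W ↔
      a ≤ 2 * k ∧ b ≤ 2 * i ∧ (2 * k - a, 2 * i - b) ∈ W ∨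
      a ≤ 2 * k + 1 ∧ b ≤ 2 * i ∧ (2 * k + 1 - a, 2 * i - b) ∈ W ∨
      a ≤ 2 * k + 1 ∧ b ≤ 2 * i + 1 ∧ (2 * k + 1 - a, 2 * i + 1 - b) ∈ W := by
  simp only [coarsen, substitution, Set.mem_ofPred_eq, Prod.fst_add, Prod.snd_add,
    Set.mem_singleton_iff, Prod.mk.injEq]
  constructor
  · rintro ⟨⟨u, v⟩, hW, hcopy, rfl, rfl⟩
    rcases Nat.mod_two_eq_zero_or_one (a + u) with hu | hu
    · refine .inl ⟨by omega, by omega, ?_⟩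
      convert hW using 2 <;> omega
    · rcases Nat.mod_two_eq_zero_or_one (b + v) with hv | hv
      · refine .inr (.inl ⟨by omega, by omega, ?_⟩)
        convert hW using 2 <;> omega
      · refine .inr (.inr ⟨by omega, by omega, ?_⟩)
        convert hW using 2 <;> omega
  · rintro (⟨ha, hb, hW⟩ | ⟨ha, hb, hW⟩ | ⟨ha, hb, hW⟩) <;>
      exact ⟨_, hW, by omega, by omega, by omega⟩

lemma coarsen_even_zero_zero (n : ℕ) :
    coarsen (0, 0) (triangle (2 * n) \ {(0, 0)}) = triangle n := by
  ext ⟨k, i⟩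
  simp only [mem_coarsen, mem_triangle_sdiff_apex, mem_triangle]
  omega

lemma coarsen_even_two_one (n : ℕ) :
    coarsen (2, 1) (triangle (2 * n) \ {(0, 0)}) = triangle (n + 1) \ {(0, 0)} := by
  ext ⟨k, i⟩
  simp only [mem_coarsen, mem_triangle_sdiff_apex]
  omega

lemma coarsen_even_one_zero (n : ℕ) :
    coarsen (1, 0) (triangle (2 * n) \ {(0, 0)}) = triangle (n + 1) \ {(0, 0), (n, n)} := by
  ext ⟨k, i⟩
  simp only [mem_coarsen, Set.mem_sdiff, mem_triangle, Set.mem_insert_iff,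
    Set.mem_singleton_iff, Prod.mk.injEq]
  omega

lemma coarsen_even_one_one (n : ℕ) :
    coarsen (1, 1) (triangle (2 * n) \ {(0, 0)}) = triangle (n + 1) \ {(0, 0), (n, 0)} := by
  ext ⟨k, i⟩
  simp only [mem_coarsen, Set.mem_sdiff, mem_triangle, Set.mem_insert_iff,
    Set.mem_singleton_iff, Prod.mk.injEq]
  omega

lemma coarsen_odd_zero_zero {n : ℕ} (hn : 1 ≤ n) :
    coarsen (0, 0) (triangle (2 * n + 1) \ {(0, 0)}) = triangle (n + 1) := by
  ext ⟨k, i⟩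
  simp only [mem_coarsen, mem_triangle_sdiff_apex, mem_triangle]
  omega

lemma coarsen_odd_two_one (n : ℕ) :
    coarsen (2, 1) (triangle (2 * n + 1) \ {(0, 0)}) =
      triangle (n + 2) \ {(0, 0), (n + 1, 0), (n + 1, n + 1)} := by
  ext ⟨k, i⟩
  simp only [mem_coarsen, Set.mem_sdiff, mem_triangle, Set.mem_insert_iff,
    Set.mem_singleton_iff, Prod.mk.injEq]
  omega

lemma coarsen_odd_one_zero (n : ℕ) :
    coarsen (1, 0) (triangle (2 * n + 1) \ {(0, 0)}) = triangle (n + 1) \ {(0, 0)} := by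
  ext ⟨k, i⟩
  simp only [mem_coarsen, mem_triangle_sdiff_apex]
  omega

lemma coarsen_odd_one_one (n : ℕ) :
    coarsen (1, 1) (triangle (2 * n + 1) \ {(0, 0)}) = triangle (n + 1) \ {(0, 0)} := by
  ext ⟨k, i⟩
  simp only [mem_coarsen, mem_triangle_sdiff_apex]
  omega

lemma copy_of_mem_childPatterns {W s : Set (ℕ × ℕ)} {a b k i : ℕ}
    (hs : s ∈ childPatterns (a, b) W) (hq : (k, i) ∈ s) :
    (a + k) % 2 = 1 ∨ (b + i) % 2 = 0 := by
  rw [childPatterns_eq_subdivide_image] at hs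
  obtain ⟨P, -, rfl⟩ := hs
  exact hq.2.1

lemma mem_of_same_block {W s : Set (ℕ × ℕ)} {a b k i k' i' : ℕ}
    (hs : s ∈ childPatterns (a, b) W) (hq : (k, i) ∈ s) (hW : (k', i') ∈ W)
    (hk : (a + k') / 2 = (a + k) / 2) (hi : (b + i') / 2 = (b + i) / 2)
    (hcopy : (a + k') % 2 = 1 ∨ (b + i') % 2 = 0) : (k', i') ∈ s := by
  rw [childPatterns_eq_subdivide_image] at hs
  obtain ⟨P, -, rfl⟩ := hs
  refine ⟨hW, hcopy, ?_⟩
  simpa only [Prod.mk_add_mk, hk, hi] using hq.2.2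

end Subdivision

section Overlap

variable {N a b a' b' k i : ℕ} {s : Set (ℕ × ℕ)}

/-- The obstruction to a pattern occurring on two grids of blocks: the copies in a block with a
filled cell are filled, so none of them is an empty cell of the other grid. -/
lemma copy_of_same_block (hs : s ∈ childPatterns (a, b) (triangle N \ {(0, 0)}))
    (hs' : s ∈ childPatterns (a', b') (triangle N \ {(0, 0)})) (hq : (k, i) ∈ s) (k' i' : ℕ)
    (hW : i' ≤ k' ∧ 1 ≤ k' ∧ k' < N) (hk : (a + k') / 2 = (a + k) / 2)
    (hi : (b + i') / 2 = (b + i) / 2) (hcopy : (a + k') % 2 = 1 ∨ (b + i') % 2 = 0) :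
    (a' + k') % 2 = 1 ∨ (b' + i') % 2 = 0 :=
  copy_of_mem_childPatterns hs'
    (mem_of_same_block hs hq (mem_triangle_sdiff_apex.2 hW) hk hi hcopy)

lemma bounds_of_mem_childPatterns (hs : s ∈ childPatterns (a, b) (triangle N \ {(0, 0)}))
    (hq : (k, i) ∈ s) : i ≤ k ∧ 1 ≤ k ∧ k < N := by
  obtain ⟨x, -, rfl⟩ := hs
  exact mem_triangle_sdiff_apex.1 hq.1

lemma row_eq_one_of_mem_inter_same_row (hs : s ∈ childPatterns (a, b) (triangle N \ {(0, 0)}))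
    (hs' : s ∈ childPatterns (a', b') (triangle N \ {(0, 0)})) (ha : a % 2 = a' % 2)
    (hb : b % 2 ≠ b' % 2) (hq : (k, i) ∈ s) : k = 1 ∧ a % 2 = 0 := by
  wlog hi : (b + i) % 2 = 0 generalizing a b a' b'
  · have := this hs' hs ha.symm hb.symm (by omega)
    omega
  have copy' := copy_of_mem_childPatterns hs' hq
  have bounds := bounds_of_mem_childPatterns hs hq
  by_contra hk
  rcases Nat.eq_zero_or_pos i with rfl | hi_pos
  · have := copy_of_same_block hs hs' hq (k - 1) 0 (by omega) (by omega) (by omega) (by omega)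
    omega
  · have := copy_of_same_block hs' hs hq (k - 1) (i - 1) (by omega) (by omega) (by omega)
      (by omega)
    omega

lemma eq_right_corner_of_mem_inter_same_col (hs : s ∈ childPatterns (a, b) (triangle N \ {(0, 0)}))
    (hs' : s ∈ childPatterns (a', b') (triangle N \ {(0, 0)})) (ha : a % 2 ≠ a' % 2)
    (hb : b % 2 = b' % 2) (hq : (k, i) ∈ s) : k = N - 1 ∧ i = N - 1 ∧ (N + 1 + b) % 2 = 0 := by
  wlog hk : (a + k) % 2 = 1 generalizing a b a' b'
  · have := this hs' hs ha.symm hb.symm (by omega)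
    omega
  have copy' := copy_of_mem_childPatterns hs' hq
  have bounds := bounds_of_mem_childPatterns hs hq
  have right_side : i = k := by
    by_contra hik
    have := copy_of_same_block hs hs' hq k (i + 1) (by omega) rfl (by omega) (by omega)
    omega
  have last_row : k = N - 1 := by
    by_contra hkN
    have := copy_of_same_block hs' hs hq (k + 1) (i + 1) (by omega) (by omega) (by omega)
      (by omega)
    omega
  omega

lemma eq_left_corner_of_mem_inter_diagonal (hs : s ∈ childPatterns (a, b) (triangle N \ {(0, 0)}))
    (hs' : s ∈ childPatterns (a', b') (triangle N \ {(0, 0)})) (ha : a % 2 ≠ a' % 2)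
    (hb : b % 2 ≠ b' % 2) (hq : (k, i) ∈ s) : k = N - 1 ∧ i = 0 ∧ (N + 1 + a + b) % 2 = 0 := by
  wlog hk : (a + k) % 2 = 1 generalizing a b a' b'
  · have := this hs' hs ha.symm hb.symm (by omega)
    omega
  have copy' := copy_of_mem_childPatterns hs' hq
  have bounds := bounds_of_mem_childPatterns hs hq
  have left_side : i = 0 := by
    by_contra hi
    have := copy_of_same_block hs hs' hq k (i - 1) (by omega) rfl (by omega) (by omega)
    omega
  have last_row : k = N - 1 := by
    by_contra hkN
    have := copy_of_same_block hs' hs hq (k + 1) i (by omega) (by omega) rfl (by omega)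
    omega
  omega

end Overlap

lemma exists_two_pow_eq_two_mul_gt (m : ℕ) : ∃ M K : ℕ, 2 ^ M = 2 * K ∧ m < K :=
  ⟨m + 1, 2 ^ m, pow_succ' 2 m, Nat.lt_two_pow_self⟩

section SpecialPatterns

variable {N a b : ℕ}

lemma empty_mem_childPatterns (N a b : ℕ) : ∅ ∈ childPatterns (a, b) (triangle N \ {(0, 0)}) := by
  obtain ⟨M, K, hMK, hK⟩ := exists_two_pow_eq_two_mul_gt (2 * (a + b + N))
  refine ⟨(2 ^ M + a, 2 * (a + N) + b), mem_childPositions.2 (by omega), ?_⟩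
  ext ⟨k, i⟩
  simp only [Set.mem_empty_iff_false, iff_false]
  rintro ⟨hW, h⟩
  have := mem_triangle_sdiff_apex.1 hW
  rw [Prod.mk_add_mk, add_assoc] at h
  exact two_pow_add_notMem_oddPascal (by omega) (by omega) h

lemma second_row_mem_childPatterns (hN : 2 ≤ N) (ha : a % 2 = 0) :
    {(1, 0), (1, 1)} ∈ childPatterns (a, b) (triangle N \ {(0, 0)}) := by
  obtain ⟨M, K, hMK, hK⟩ := exists_two_pow_eq_two_mul_gt (2 * (a + b + N))
  refine ⟨(2 ^ M - 2, 2 * N + b), mem_childPositions.2 (by omega), ?_⟩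
  ext ⟨k, i⟩
  simp only [patternAt, Set.mem_ofPred_eq, mem_triangle_sdiff_apex, Prod.mk_add_mk,
    Set.mem_insert_iff, Set.mem_singleton_iff, Prod.mk.injEq]
  constructor
  · rintro ⟨hW, h⟩
    by_contra hq
    have hrow : 2 ^ M - 2 + k = 2 ^ M + (k - 2) := by omega
    rw [hrow] at h
    exact two_pow_add_notMem_oddPascal (by omega) (by omega) h
  · intro hq
    have hrow : 2 ^ M - 2 + k = 2 ^ M - 1 := by omega
    rw [hrow]
    exact ⟨by omega, two_pow_sub_one_mem_oddPascal (by omega)⟩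

lemma left_corner_mem_childPatterns (hN : 2 ≤ N) (hab : (N + 1 + a + b) % 2 = 0) :
    {(N - 1, 0)} ∈ childPatterns (a, b) (triangle N \ {(0, 0)}) := by
  obtain ⟨M, K, hMK, hK⟩ := exists_two_pow_eq_two_mul_gt (2 * (a + b + N))
  refine ⟨(2 ^ M + (2 * N + b - (N - 1)), 2 * N + b), mem_childPositions.2 (by omega), ?_⟩
  ext ⟨k, i⟩
  simp only [patternAt, Set.mem_ofPred_eq, mem_triangle_sdiff_apex, Prod.mk_add_mk, add_assoc,
    Set.mem_singleton_iff, Prod.mk.injEq]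
  constructor
  · rintro ⟨hW, h⟩
    by_contra hq
    exact two_pow_add_notMem_oddPascal (by omega) (by omega) h
  · rintro ⟨rfl, rfl⟩
    rw [Nat.sub_add_cancel (by omega)]
    exact ⟨by omega, two_pow_add_self_mem_oddPascal (by omega)⟩

lemma right_corner_mem_childPatterns (hN : 2 ≤ N) (hb : (N + 1 + b) % 2 = 0) :
    {(N - 1, N - 1)} ∈ childPatterns (a, b) (triangle N \ {(0, 0)}) := by
  obtain ⟨M, K, hMK, hK⟩ := exists_two_pow_eq_two_mul_gt (2 * (a + b + N))
  refine ⟨(2 ^ M + a, 2 ^ M - (N - 1)), mem_childPositions.2 (by omega), ?_⟩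
  ext ⟨k, i⟩
  simp only [patternAt, Set.mem_ofPred_eq, mem_triangle_sdiff_apex, Prod.mk_add_mk, add_assoc,
    Set.mem_singleton_iff, Prod.mk.injEq]
  constructor
  · rintro ⟨hW, h⟩
    by_contra hq
    exact two_pow_add_notMem_oddPascal (by omega) (by omega) h
  · rintro ⟨rfl, rfl⟩
    rw [Nat.sub_add_cancel (by omega)]
    exact ⟨by omega, two_pow_add_two_pow_mem_oddPascal (by omega)⟩

end SpecialPatterns

section Count

variable {N a b a' b' : ℕ}

lemma childPatterns_inter_even_row (hN : 2 ≤ N) (ha : a % 2 = 0) (ha' : a' % 2 = 0)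
    (hb : b % 2 ≠ b' % 2) :
    childPatterns (a, b) (triangle N \ {(0, 0)}) ∩ childPatterns (a', b') (triangle N \ {(0, 0)}) =
      {∅, {(1, 0), (1, 1)}} := by
  ext s
  constructor
  · rintro ⟨hs, hs'⟩
    have only_row {k i : ℕ} (hq : (k, i) ∈ s) : k = 1 :=
      (row_eq_one_of_mem_inter_same_row hs hs' (ha.trans ha'.symm) hb hq).1
    have row_iff : (1, 0) ∈ s ↔ (1, 1) ∈ s := by
      rcases Nat.mod_two_eq_zero_or_one b with hb0 | hb1
      · constructor <;> intro hq <;>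
          refine mem_of_same_block hs hq (mem_triangle_sdiff_apex.2 (by omega)) rfl ?_ ?_ <;> omega
      · constructor <;> intro hq <;>
          refine mem_of_same_block hs' hq (mem_triangle_sdiff_apex.2 (by omega)) rfl ?_ ?_ <;> omega
    have cells {k i : ℕ} (hq : (k, i) ∈ s) : k = 1 ∧ (i = 0 ∨ i = 1) := by
      have := bounds_of_mem_childPatterns hs hq
      have := only_row hq
      omega
    by_cases h : (1, 0) ∈ s
    · right
      ext ⟨k, i⟩
      constructor
      · intro hq
        obtain ⟨rfl, rfl | rfl⟩ := cells hq <;> simp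
      · rintro (⟨rfl, rfl⟩ | ⟨rfl, rfl⟩)
        exacts [h, row_iff.1 h]
    · left
      refine Set.eq_empty_of_forall_notMem fun ⟨k, i⟩ hq => ?_
      obtain ⟨rfl, rfl | rfl⟩ := cells hq
      exacts [h hq, h (row_iff.2 hq)]
  · rintro (rfl | rfl)
    · exact ⟨empty_mem_childPatterns N a b, empty_mem_childPatterns N a' b'⟩
    · exact ⟨second_row_mem_childPatterns hN ha, second_row_mem_childPatterns hN ha'⟩

lemma childPatterns_inter_odd_row (ha : a % 2 = 1) (ha' : a' % 2 = 1) (hb : b % 2 ≠ b' % 2) :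
    childPatterns (a, b) (triangle N \ {(0, 0)}) ∩ childPatterns (a', b') (triangle N \ {(0, 0)}) =
      {∅} := by
  refine Set.eq_singleton_iff_unique_mem.2
    ⟨⟨empty_mem_childPatterns N a b, empty_mem_childPatterns N a' b'⟩, ?_⟩
  rintro s ⟨hs, hs'⟩
  refine Set.eq_empty_of_forall_notMem fun q hq => ?_
  have := (row_eq_one_of_mem_inter_same_row hs hs' (ha.trans ha'.symm) hb hq).2
  omega

lemma inter_eq_ite_of_mem_eq {α : Type*} {A B : Set (Set α)} {p : α} {c : Prop} [Decidable c]
    (hA : ∅ ∈ A) (hB : ∅ ∈ B) (hpA : c → {p} ∈ A) (hpB : c → {p} ∈ B)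
    (h : ∀ s ∈ A, s ∈ B → ∀ q ∈ s, q = p ∧ c) :
    A ∩ B = if c then {∅, {p}} else {∅} := by
  ext s
  constructor
  · rintro ⟨hsA, hsB⟩
    have := h s hsA hsB
    split_ifs with hc
    · exact Set.subset_singleton_iff_eq.1 fun q hq => (this q hq).1
    · exact Set.eq_empty_of_forall_notMem fun q hq => hc (this q hq).2
  · split_ifs with hc
    · rintro (rfl | rfl)
      exacts [⟨hA, hB⟩, ⟨hpA hc, hpB hc⟩]
    · rintro rfl
      exact ⟨hA, hB⟩

lemma childPatterns_inter_same_col (hN : 2 ≤ N) (ha : a % 2 ≠ a' % 2) (hb : b % 2 = b' % 2) :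
    childPatterns (a, b) (triangle N \ {(0, 0)}) ∩ childPatterns (a', b') (triangle N \ {(0, 0)}) =
      if (N + 1 + b) % 2 = 0 then {∅, {(N - 1, N - 1)}} else {∅} := by
  refine inter_eq_ite_of_mem_eq (empty_mem_childPatterns N a b) (empty_mem_childPatterns N a' b')
    (right_corner_mem_childPatterns hN) (fun h => right_corner_mem_childPatterns hN (by omega))
    fun s hs hs' q hq => ?_
  obtain ⟨hk, hi, hparity⟩ := eq_right_corner_of_mem_inter_same_col hs hs' ha hb hq
  exact ⟨Prod.ext hk hi, hparity⟩

lemma childPatterns_inter_diagonal (hN : 2 ≤ N) (ha : a % 2 ≠ a' % 2) (hb : b % 2 ≠ b' % 2) :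
    childPatterns (a, b) (triangle N \ {(0, 0)}) ∩ childPatterns (a', b') (triangle N \ {(0, 0)}) =
      if (N + 1 + a + b) % 2 = 0 then {∅, {(N - 1, 0)}} else {∅} := by
  refine inter_eq_ite_of_mem_eq (empty_mem_childPatterns N a b) (empty_mem_childPatterns N a' b')
    (left_corner_mem_childPatterns hN) (fun h => left_corner_mem_childPatterns hN (by omega))
    fun s hs hs' q hq => ?_
  obtain ⟨hk, hi, hparity⟩ := eq_left_corner_of_mem_inter_diagonal hs hs' ha hb hq
  exact ⟨Prod.ext hk hi, hparity⟩

lemma ncard_patterns_sdiff_apex_add_six (hN : 2 ≤ N) :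
    (patterns (triangle N \ {(0, 0)})).ncard + 6 =
      (childPatterns (0, 0) (triangle N \ {(0, 0)})).ncard +
      (childPatterns (2, 1) (triangle N \ {(0, 0)})).ncard +
      (childPatterns (1, 0) (triangle N \ {(0, 0)})).ncard +
      (childPatterns (1, 1) (triangle N \ {(0, 0)})).ncard := by
  let F (e) := childPatterns e (triangle N \ {(0, 0)})
  have finite (e) : (F e).Finite := childPatterns_finite (triangle_finite N).sdiff e
  have inter_two_one : (F (0, 0) ∩ F (2, 1)).ncard = 2 := by
    rw [childPatterns_inter_even_row hN rfl rfl (by decide)]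
    exact Set.ncard_pair (Set.insert_nonempty _ _).ne_empty.symm
  have inter_one_zero : ((F (0, 0) ∪ F (2, 1)) ∩ F (1, 0)).ncard = 2 := by
    rw [Set.union_inter_distrib_right, childPatterns_inter_same_col hN (by decide) rfl,
      childPatterns_inter_diagonal hN (by decide) (by decide)]
    rcases Nat.mod_two_eq_zero_or_one N with h | h <;> simp [Nat.add_mod, h]
  have inter_one_one : ((F (0, 0) ∪ F (2, 1) ∪ F (1, 0)) ∩ F (1, 1)).ncard = 2 := by
    rw [Set.union_inter_distrib_right, Set.union_inter_distrib_right,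
      childPatterns_inter_diagonal hN (by decide) (by decide),
      childPatterns_inter_same_col hN (by decide) rfl,
      childPatterns_inter_odd_row rfl rfl (by decide)]
    rcases Nat.mod_two_eq_zero_or_one N with h | h <;> simp [Nat.add_mod, h]
  have union_two_one := Set.ncard_union_add_ncard_inter (F (0, 0)) (F (2, 1))
    (finite _) (finite _)
  have union_one_zero := Set.ncard_union_add_ncard_inter (F (0, 0) ∪ F (2, 1)) (F (1, 0))
    ((finite _).union (finite _)) (finite _)
  have union_one_one := Set.ncard_union_add_ncard_inter (F (0, 0) ∪ F (2, 1) ∪ F (1, 0)) (F (1, 1))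
    (((finite _).union (finite _)).union (finite _)) (finite _)
  rw [patterns_eq_union_childPatterns]
  change (F (0, 0) ∪ F (2, 1) ∪ F (1, 0) ∪ F (1, 1)).ncard + 6 =
    (F (0, 0)).ncard + (F (2, 1)).ncard + (F (1, 0)).ncard + (F (1, 1)).ncard
  omega

end Count

lemma ncard_PtopCut_two_mul {n : ℕ} (hn : 1 ≤ n) :
    (PtopCut (2 * n)).ncard + 6 =
      (Pup n).ncard + 2 * (PbotCut (n + 1)).ncard + (PtopCut (n + 1)).ncard := by
  simp only [ncard_PtopCut, ncard_Pup, ncard_PbotCut, Nat.add_sub_cancel,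
    ncard_patterns_sdiff_apex_add_six (N := 2 * n) (by omega), ncard_childPatterns,
    coarsen_even_zero_zero, coarsen_even_two_one, coarsen_even_one_zero, coarsen_even_one_one,
    ncard_patterns_sdiff_apex_right, ncard_patterns_sdiff_apex_left]
  ring

lemma ncard_PtopCut_two_mul_add_one {n : ℕ} (hn : 1 ≤ n) :
    (PtopCut (2 * n + 1)).ncard + 6 =
      (Pup (n + 1)).ncard + 2 * (PtopCut (n + 1)).ncard + (PfullyCut (n + 2)).ncard := by
  simp only [ncard_PtopCut, ncard_Pup, ncard_PfullyCut, Nat.add_succ_sub_one,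
    ncard_patterns_sdiff_apex_add_six (N := 2 * n + 1) (by omega), ncard_childPatterns,
    coarsen_odd_zero_zero hn, coarsen_odd_two_one, coarsen_odd_one_zero, coarsen_odd_one_one]
  ring

end Sierpinski

theorem sierpinski_recursion_B (n : ℕ) (hn : 2 ≤ n) :
    (PtopCut (2 * n)).ncard + 6 =
      (Pup n).ncard + 2 * (PbotCut (n + 1)).ncard + (PtopCut (n + 1)).ncard ∧
    (PtopCut (2 * n + 1)).ncard + 6 =
      (Pup (n + 1)).ncard + 2 * (PtopCut (n + 1)).ncard + (PfullyCut (n + 2)).ncard := by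
  have hn_pos : 1 ≤ n := one_le_two.trans hn
  exact ⟨Sierpinski.ncard_PtopCut_two_mul hn_pos, Sierpinski.ncard_PtopCut_two_mul_add_one hn_pos⟩
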